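/- arXiv:1809.03673 — 2 statements merged into one kernel-verified Lean document; each statement's English description precedes it below -/
import Mathlib

section
/- For every nonnegative integer N, the equation x² + 3y² + (3z² − 2z) = N has an integer solution (x, y, z) ∈ ℤ³. That is, the ternary mixed sum x²+3y²+P₈(z) of generalized 4- and 8-gonal numbers is universal. -/
/-!
Since `3 (x² + 3 y² + P₈(z)) + 1 = 3 x² + (3 y)² + (3 z - 1)²`, it suffices to write
`n = 3 N + 1` as `u² + q² + 3 x²`: modulo 3, exactly one of `u`, `q` is then divisible by 3. In fact
every positive `n` prime to 3 has this shape. By Hermite reduction, `x² + y² + y z + z²` is up to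
equivalence the only positive definite form of its discriminant, and `y² + y z + z²` takes the same
values as `q² + 3 r²`. So one only needs some positive definite form of this discriminant
representing `n`; as in the classical proof of the three-squares theorem, it comes from a prime
`p = 4 n E - 3` supplied by Dirichlet's theorem, for which quadratic reciprocity makes `-E` a square
modulo `p`.
-/

theorem exists_two_mul_abs_add_mul_le {m : ℤ} (hm : 0 < m) (r : ℤ) :
    ∃ k : ℤ, 2 * |r + m * k| ≤ m := by
  have h2m : 0 < 2 * m := by linarith
  obtain ⟨k, ⟨hlower, hupper⟩, -⟩ := existsUnique_add_zsmul_mem_Ico h2m (2 * r) (-m)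
  rw [smul_eq_mul] at hlower hupper
  refine ⟨k, ?_⟩
  rw [← abs_two, ← abs_mul, abs_le]
  constructor <;> linarith

theorem isUnit_and_eq_zero_of_sq_add_sq_add_sq_eq {d e f : ℤ} (hd : |d| ≤ 1) (he : |e| ≤ 1)
    (hf : |f| ≤ 1) (h : d ^ 2 + e ^ 2 + f ^ 2 = 1 + d * e * f) :
    (IsUnit d ∧ e = 0 ∧ f = 0) ∨ (d = 0 ∧ IsUnit e ∧ f = 0) ∨ (d = 0 ∧ e = 0 ∧ IsUnit f) := by
  obtain ⟨hd₁, hd₂⟩ := abs_le.1 hd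
  obtain ⟨he₁, he₂⟩ := abs_le.1 he
  obtain ⟨hf₁, hf₂⟩ := abs_le.1 hf
  interval_cases d <;> interval_cases e <;> interval_cases f <;> simp_all

/-- The integral ternary quadratic form `a x² + b y² + c z² + d y z + e x z + f x y`. The mixed
coefficients are not required to be even. -/
structure TernaryForm where
  (a b c d e f : ℤ)

namespace TernaryForm

open Matrix

variable {F G H : TernaryForm} {n : ℤ}

/-- The Gram matrix of the polar form of `F`, that is, the Hessian of `F`: twice the matrix usually
attached to `F`, so that its entries are integers. -/
def gram (F : TernaryForm) : Matrix (Fin 3) (Fin 3) ℤ :=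
  !![2 * F.a, F.f, F.e; F.f, 2 * F.b, F.d; F.e, F.d, 2 * F.c]

/-- The value of `F` at the vector `v = (x, y, z)`. -/
def eval (F : TernaryForm) (v : Fin 3 → ℤ) : ℤ :=
  F.a * v 0 ^ 2 + F.b * v 1 ^ 2 + F.c * v 2 ^ 2 + F.d * v 1 * v 2 + F.e * v 0 * v 2 +
    F.f * v 0 * v 1

/-- `F` represents `n` if it takes the value `n` at some integral vector, possibly zero. -/
def Represents (F : TernaryForm) (n : ℤ) : Prop :=
  ∃ v, F.eval v = n

/-- The half-discriminant of `F`: half the determinant of its Gram matrix. -/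
def disc (F : TernaryForm) : ℤ :=
  4 * F.a * F.b * F.c + F.d * F.e * F.f - F.a * F.d ^ 2 - F.b * F.e ^ 2 - F.c * F.f ^ 2

/-- The minor of the Gram matrix on the variables `x, y`. Completing the square gives
`4 a F = (2 a x + f y + e z)² + minorXY y² + 2 crossMinor y z + minorXZ z²`. -/
def minorXY (F : TernaryForm) : ℤ :=
  4 * F.a * F.b - F.f ^ 2

/-- The minor of the Gram matrix on the variables `x, z`. -/
def minorXZ (F : TernaryForm) : ℤ :=
  4 * F.a * F.c - F.e ^ 2

/-- The minor of the Gram matrix with rows `x, y` and columns `x, z`. -/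
def crossMinor (F : TernaryForm) : ℤ :=
  2 * F.a * F.d - F.e * F.f

theorem two_mul_eval (F : TernaryForm) (v : Fin 3 → ℤ) :
    2 * F.eval v = v ⬝ᵥ F.gram *ᵥ v := by
  simp only [eval, gram, dotProduct, mulVec, Fin.sum_univ_three, of_apply, cons_val', cons_val_zero,
    cons_val_one, cons_val]
  ring

theorem det_gram (F : TernaryForm) : F.gram.det = 2 * F.disc := by
  simp only [gram, disc, det_fin_three, of_apply, cons_val', cons_val_zero, cons_val_one, cons_val]
  ring

theorem minorXY_mul_minorXZ (F : TernaryForm) :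
    F.minorXY * F.minorXZ = F.crossMinor ^ 2 + 4 * F.a * F.disc := by
  simp only [minorXY, minorXZ, crossMinor, disc]
  ring

/-- `F` and `G` are equivalent if `G v = F (M v)` for an invertible integral matrix `M`; this is
expressed through the Gram matrices. -/
def Equivalent (F G : TernaryForm) : Prop :=
  ∃ M : Matrix (Fin 3) (Fin 3) ℤ, IsUnit M.det ∧ G.gram = Mᵀ * F.gram * M

theorem Equivalent.trans (hFG : F.Equivalent G) (hGH : G.Equivalent H) : F.Equivalent H := by
  obtain ⟨M, hM, hG⟩ := hFG
  obtain ⟨N, hN, hH⟩ := hGH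
  refine ⟨M * N, by rw [det_mul]; exact hM.mul hN, ?_⟩
  rw [hH, hG, transpose_mul]
  simp only [Matrix.mul_assoc]

theorem Equivalent.disc_eq (h : F.Equivalent G) : G.disc = F.disc := by
  obtain ⟨M, hM, hG⟩ := h
  have hdet : G.gram.det = F.gram.det := by
    rw [hG, det_mul, det_mul, det_transpose]
    linear_combination F.gram.det * Int.isUnit_mul_self hM
  rw [det_gram, det_gram] at hdet
  linarith

theorem Equivalent.represents (h : F.Equivalent G) (hF : F.Represents n) : G.Represents n := by
  obtain ⟨M, hM, hG⟩ := h
  obtain ⟨v, rfl⟩ := hF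
  refine ⟨M⁻¹ *ᵥ v, mul_left_cancel₀ two_ne_zero ?_⟩
  have hv : M *ᵥ M⁻¹ *ᵥ v = v := by rw [mulVec_mulVec, mul_nonsing_inv M hM, one_mulVec]
  rw [two_mul_eval, two_mul_eval, hG, ← mulVec_mulVec, ← mulVec_mulVec, hv, mulVec_transpose,
    dotProduct_comm, ← dotProduct_mulVec, hv, dotProduct_comm]

/-- The form `F (y, x, z)`. -/
def swapXY (F : TernaryForm) : TernaryForm :=
  ⟨F.b, F.a, F.c, F.e, F.d, F.f⟩

/-- The form `F (x, z, y)`. -/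
def swapYZ (F : TernaryForm) : TernaryForm :=
  ⟨F.a, F.c, F.b, F.d, F.f, F.e⟩

/-- The form `F (x + k y + l z, y, z)`. -/
def shearX (F : TernaryForm) (k l : ℤ) : TernaryForm :=
  ⟨F.a, F.b + F.f * k + F.a * k ^ 2, F.c + F.e * l + F.a * l ^ 2,
    F.d + 2 * F.a * k * l + F.e * k + F.f * l, F.e + 2 * F.a * l, F.f + 2 * F.a * k⟩

/-- The form `F (x, y + m z, z)`. -/
def shearY (F : TernaryForm) (m : ℤ) : TernaryForm :=
  ⟨F.a, F.b, F.c + F.d * m + F.b * m ^ 2, F.d + 2 * F.b * m, F.e + F.f * m, F.f⟩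

theorem equivalent_swapXY (F : TernaryForm) : F.Equivalent F.swapXY := by
  refine ⟨!![0, 1, 0; 1, 0, 0; 0, 0, 1], by simp [det_fin_three], ?_⟩
  ext i j
  fin_cases i <;> fin_cases j <;> simp [gram, swapXY, mul_apply, Fin.sum_univ_three]

theorem equivalent_swapYZ (F : TernaryForm) : F.Equivalent F.swapYZ := by
  refine ⟨!![1, 0, 0; 0, 0, 1; 0, 1, 0], by simp [det_fin_three], ?_⟩
  ext i j
  fin_cases i <;> fin_cases j <;> simp [gram, swapYZ, mul_apply, Fin.sum_univ_three]

theorem equivalent_shearX (F : TernaryForm) (k l : ℤ) : F.Equivalent (F.shearX k l) := by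
  refine ⟨!![1, k, l; 0, 1, 0; 0, 0, 1], by simp [det_fin_three], ?_⟩
  ext i j
  fin_cases i <;> fin_cases j <;>
    simp only [gram, shearX, mul_apply, transpose_apply, Fin.sum_univ_three, of_apply, cons_val',
      cons_val_zero, cons_val_one, cons_val, Fin.zero_eta, Fin.mk_one, Fin.reduceFinMk] <;>
    ring

theorem equivalent_shearY (F : TernaryForm) (m : ℤ) : F.Equivalent (F.shearY m) := by
  refine ⟨!![1, 0, 0; 0, 1, m; 0, 0, 1], by simp [det_fin_three], ?_⟩
  ext i j
  fin_cases i <;> fin_cases j <;>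
    simp only [gram, shearY, mul_apply, transpose_apply, Fin.sum_univ_three, of_apply, cons_val',
      cons_val_zero, cons_val_one, cons_val, Fin.zero_eta, Fin.mk_one, Fin.reduceFinMk] <;>
    ring

theorem minorXY_shearX (F : TernaryForm) (k l : ℤ) : (F.shearX k l).minorXY = F.minorXY := by
  simp only [minorXY, shearX]
  ring

theorem crossMinor_shearX (F : TernaryForm) (k l : ℤ) :
    (F.shearX k l).crossMinor = F.crossMinor := by
  simp only [crossMinor, shearX]
  ring

theorem crossMinor_shearY (F : TernaryForm) (m : ℤ) :
    (F.shearY m).crossMinor = F.crossMinor + F.minorXY * m := by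
  simp only [crossMinor, minorXY, shearY]
  ring

/-- Positive definiteness, encoded by Sylvester's criterion. -/
structure IsPosDef (F : TernaryForm) : Prop where
  a_pos : 0 < F.a
  minorXY_pos : 0 < F.minorXY
  disc_pos : 0 < F.disc

namespace IsPosDef

theorem b_pos (hF : F.IsPosDef) : 0 < F.b := by
  have hmul : 0 < F.a * F.b := by
    have hminor := hF.minorXY_pos
    rw [minorXY] at hminor
    linarith [sq_nonneg F.f]
  exact (pos_iff_pos_of_mul_pos hmul).1 hF.a_pos

theorem minorXZ_pos (hF : F.IsPosDef) : 0 < F.minorXZ := by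
  have hmul : 0 < F.minorXY * F.minorXZ := by
    rw [minorXY_mul_minorXZ]
    have := mul_pos hF.a_pos hF.disc_pos
    nlinarith [sq_nonneg F.crossMinor]
  exact (pos_iff_pos_of_mul_pos hmul).1 hF.minorXY_pos

theorem swapXY (hF : F.IsPosDef) : F.swapXY.IsPosDef where
  a_pos := hF.b_pos
  minorXY_pos := hF.minorXY_pos.trans_eq (by simp only [minorXY, TernaryForm.swapXY]; ring)
  disc_pos := hF.disc_pos.trans_eq F.equivalent_swapXY.disc_eq.symm

theorem swapYZ (hF : F.IsPosDef) : F.swapYZ.IsPosDef where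
  a_pos := hF.a_pos
  minorXY_pos := hF.minorXZ_pos
  disc_pos := hF.disc_pos.trans_eq F.equivalent_swapYZ.disc_eq.symm

end IsPosDef

/-- The off-diagonal entries of the Gram matrix, and those of the binary form left after completing
the square in `x`, are as small as shears can make them. -/
structure IsSizeReduced (F : TernaryForm) : Prop where
  abs_f_le : |F.f| ≤ F.a
  abs_e_le : |F.e| ≤ F.a
  two_mul_abs_crossMinor_le : 2 * |F.crossMinor| ≤ F.minorXY

/-- Hermite reduction: `F` is size-reduced, and no swap of two adjacent variables decreases the
pair `(a, minorXY)` lexicographically. -/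
structure IsReduced (F : TernaryForm) : Prop extends IsSizeReduced F where
  a_le_b : F.a ≤ F.b
  minorXY_le_minorXZ : F.minorXY ≤ F.minorXZ

theorem IsPosDef.exists_equivalent_isSizeReduced (hF : F.IsPosDef) :
    ∃ G, F.Equivalent G ∧ G.IsPosDef ∧ G.IsSizeReduced ∧ G.a = F.a ∧ G.minorXY = F.minorXY := by
  obtain ⟨m, hm⟩ := exists_two_mul_abs_add_mul_le hF.minorXY_pos F.crossMinor
  have h2a : 0 < 2 * F.a := by linarith [hF.a_pos]
  obtain ⟨k, hk⟩ := exists_two_mul_abs_add_mul_le h2a (F.shearY m).f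
  obtain ⟨l, hl⟩ := exists_two_mul_abs_add_mul_le h2a (F.shearY m).e
  have hequiv : F.Equivalent ((F.shearY m).shearX k l) :=
    (F.equivalent_shearY m).trans ((F.shearY m).equivalent_shearX k l)
  have hminor : ((F.shearY m).shearX k l).minorXY = F.minorXY := minorXY_shearX _ k l
  refine ⟨_, hequiv, ⟨hF.a_pos, hF.minorXY_pos.trans_eq hminor.symm,
    hF.disc_pos.trans_eq hequiv.disc_eq.symm⟩, ⟨?_, ?_, ?_⟩, rfl, hminor⟩
  · exact le_of_mul_le_mul_left hk two_pos
  · exact le_of_mul_le_mul_left hl two_pos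
  · rwa [crossMinor_shearX, crossMinor_shearY, hminor]

theorem IsPosDef.exists_equivalent_isReduced {F : TernaryForm} (hF : F.IsPosDef) :
    ∃ G, F.Equivalent G ∧ G.IsPosDef ∧ G.IsReduced := by
  obtain ⟨G, hFG, hG, hsize, ha, hminor⟩ := hF.exists_equivalent_isSizeReduced
  by_cases hab : G.a ≤ G.b
  · by_cases hminors : G.minorXY ≤ G.minorXZ
    · exact ⟨G, hFG, hG, hsize, hab, hminors⟩
    · obtain ⟨H, hGH, hH⟩ := hG.swapYZ.exists_equivalent_isReduced
      exact ⟨H, hFG.trans (G.equivalent_swapYZ.trans hGH), hH⟩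
  · obtain ⟨H, hGH, hH⟩ := hG.swapXY.exists_equivalent_isReduced
    exact ⟨H, hFG.trans (G.equivalent_swapXY.trans hGH), hH⟩
termination_by (F.a.toNat, F.minorXY.toNat)
decreasing_by
  · have hswap_a : G.swapYZ.a = F.a := ha
    have hswap_lt : G.swapYZ.minorXY < F.minorXY := (not_le.1 hminors).trans_eq hminor
    rw [hswap_a]
    exact Prod.Lex.right _ ((Int.toNat_lt_toNat hF.minorXY_pos).2 hswap_lt)
  · have hswap_lt : G.swapXY.a < F.a := (not_le.1 hab).trans_eq ha
    exact Prod.Lex.left _ _ ((Int.toNat_lt_toNat hF.a_pos).2 hswap_lt)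

namespace IsReduced

theorem three_mul_a_sq_le_minorXY (hF : F.IsReduced) (ha : 0 < F.a) : 3 * F.a ^ 2 ≤ F.minorXY := by
  have hf : F.f ^ 2 ≤ F.a ^ 2 := sq_le_sq' (abs_le.1 hF.abs_f_le).1 (abs_le.1 hF.abs_f_le).2
  have hab := mul_le_mul_of_nonneg_left hF.a_le_b ha.le
  rw [minorXY]
  linarith

theorem four_mul_crossMinor_sq_le (hF : F.IsReduced) : 4 * F.crossMinor ^ 2 ≤ F.minorXY ^ 2 := by
  have h := pow_le_pow_left₀ (by positivity) hF.two_mul_abs_crossMinor_le 2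
  rwa [mul_pow, sq_abs] at h

theorem three_mul_minorXY_sq_le (hF : F.IsReduced) (hminor : 0 < F.minorXY) :
    3 * F.minorXY ^ 2 ≤ 16 * F.a * F.disc := by
  have hmul := mul_le_mul_of_nonneg_left hF.minorXY_le_minorXZ hminor.le
  linarith [F.minorXY_mul_minorXZ, hF.four_mul_crossMinor_sq_le]

/-- Hermite's bound `a³ ≤ (4/3)³ (disc / 4)`; the determinant of `F` is `disc / 4`. -/
theorem a_pow_three_le (hF : F.IsReduced) (hpos : F.IsPosDef) : 27 * F.a ^ 3 ≤ 16 * F.disc := by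
  have hminor := hF.three_mul_a_sq_le_minorXY hpos.a_pos
  have hsq : (3 * F.a ^ 2) ^ 2 ≤ F.minorXY ^ 2 := pow_le_pow_left₀ (by positivity) hminor 2
  refine le_of_mul_le_mul_left ?_ hpos.a_pos
  linarith [hF.three_mul_minorXY_sq_le hpos.minorXY_pos]

theorem a_eq_one (hF : F.IsReduced) (hpos : F.IsPosDef) (hdisc : F.disc = 3) : F.a = 1 := by
  have ha := hpos.a_pos
  have hbound := hF.a_pow_three_le hpos
  rw [hdisc] at hbound
  by_contra hne
  have : 2 ^ 3 ≤ F.a ^ 3 := pow_le_pow_left₀ (by norm_num) (by omega) 3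
  linarith

theorem b_eq_one_and_c_eq_one (hF : F.IsReduced) (hpos : F.IsPosDef) (hdisc : F.disc = 3) :
    F.b = 1 ∧ F.c = 1 := by
  have ha := hF.a_eq_one hpos hdisc
  have hminors := F.minorXY_mul_minorXZ
  have hminor_sq := hF.three_mul_minorXY_sq_le hpos.minorXY_pos
  have hcross := hF.four_mul_crossMinor_sq_le
  have hminor := hF.three_mul_a_sq_le_minorXY hpos.a_pos
  have hle := hF.minorXY_le_minorXZ
  have hf : F.f ^ 2 ≤ 1 := (sq_le_one_iff_abs_le_one _).2 (ha ▸ hF.abs_f_le)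
  have he : F.e ^ 2 ≤ 1 := (sq_le_one_iff_abs_le_one _).2 (ha ▸ hF.abs_e_le)
  rw [ha, hdisc] at hminors hminor_sq
  rw [ha] at hminor
  have hXY : F.minorXY ≤ 4 := by nlinarith
  have hXZ : F.minorXZ ≤ 5 := by nlinarith
  have hb : F.minorXY = 4 * F.b - F.f ^ 2 := by rw [minorXY, ha]; ring
  have hc : F.minorXZ = 4 * F.c - F.e ^ 2 := by rw [minorXZ, ha]; ring
  have := sq_nonneg F.f
  have := sq_nonneg F.e
  constructor <;> omega

end IsReduced

/-- The form `x² + y² + y z + z²`, the sum of a square and the norm form of the Eisenstein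
integers. -/
def squareAddEisenstein : TernaryForm :=
  ⟨1, 1, 1, 1, 0, 0⟩

theorem equivalent_squareAddEisenstein_of_isUnit {ε : ℤ} (hε : IsUnit ε) :
    (⟨1, 1, 1, ε, 0, 0⟩ : TernaryForm).Equivalent squareAddEisenstein := by
  refine ⟨!![1, 0, 0; 0, 1, 0; 0, 0, ε], by simpa [det_fin_three] using hε, ?_⟩
  ext i j
  fin_cases i <;> fin_cases j <;>
    simp [gram, squareAddEisenstein, mul_apply, Fin.sum_univ_three, mul_right_comm ε,
      Int.isUnit_mul_self hε]

theorem IsReduced.abs_d_le_one (hF : F.IsReduced) (ha : F.a = 1) (hb : F.b = 1) : |F.d| ≤ 1 := by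
  have hef : |F.e * F.f| ≤ 1 := by
    rw [abs_mul]
    exact mul_le_one₀ (ha ▸ hF.abs_e_le) (abs_nonneg _) (ha ▸ hF.abs_f_le)
  have hcross := hF.two_mul_abs_crossMinor_le
  rw [crossMinor, minorXY, ha, hb] at hcross
  have hcross_le : |2 * 1 * F.d - F.e * F.f| ≤ 2 := by linarith [sq_nonneg F.f]
  rw [abs_le] at hef hcross_le ⊢
  omega

theorem IsReduced.equivalent_squareAddEisenstein (hF : F.IsReduced) (hpos : F.IsPosDef)
    (hdisc : F.disc = 3) : F.Equivalent squareAddEisenstein := by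
  have ha := hF.a_eq_one hpos hdisc
  obtain ⟨hb, hc⟩ := hF.b_eq_one_and_c_eq_one hpos hdisc
  have hmixed := isUnit_and_eq_zero_of_sq_add_sq_add_sq_eq (hF.abs_d_le_one ha hb)
    (ha ▸ hF.abs_e_le) (ha ▸ hF.abs_f_le)
    (by rw [disc, ha, hb, hc] at hdisc; linear_combination -hdisc)
  obtain ⟨a, b, c, d, e, f⟩ := F
  obtain rfl : a = 1 := ha
  obtain rfl : b = 1 := hb
  obtain rfl : c = 1 := hc
  rcases hmixed with ⟨hd, rfl, rfl⟩ | ⟨rfl, he, rfl⟩ | ⟨rfl, rfl, hf⟩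
  · exact equivalent_squareAddEisenstein_of_isUnit hd
  · exact (equivalent_swapXY _).trans (equivalent_squareAddEisenstein_of_isUnit he)
  · exact (equivalent_swapYZ _).trans <|
      (equivalent_swapXY _).trans (equivalent_squareAddEisenstein_of_isUnit hf)

theorem IsPosDef.equivalent_squareAddEisenstein (hF : F.IsPosDef) (hdisc : F.disc = 3) :
    F.Equivalent squareAddEisenstein := by
  obtain ⟨G, hFG, hG, hred⟩ := hF.exists_equivalent_isReduced
  exact hFG.trans (hred.equivalent_squareAddEisenstein hG (hFG.disc_eq.trans hdisc))

theorem exists_isPosDef_represents_of_dvd {m p E D B : ℤ} (hp : 0 < p) (hE : 0 < E) (hD : 0 < D)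
    (hpE : p + D = 4 * m * E) (hdvd : p ∣ E + B ^ 2) :
    ∃ F : TernaryForm, F.IsPosDef ∧ F.disc = D ∧ F.Represents m := by
  obtain ⟨A, hA⟩ := hdvd
  have hA_pos : 0 < A := by
    have hmul : 0 < p * A := by rw [← hA]; positivity
    exact (pos_iff_pos_of_mul_pos hmul).1 hp
  have hdisc : (⟨A, p, m, 0, 1, 2 * B⟩ : TernaryForm).disc = D := by
    rw [disc]
    linear_combination -4 * m * hA - hpE
  have hminor : (⟨A, p, m, 0, 1, 2 * B⟩ : TernaryForm).minorXY = 4 * E := by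
    rw [minorXY]
    linear_combination -4 * hA
  exact ⟨_, ⟨hA_pos, by rw [hminor]; positivity, hD.trans_eq hdisc.symm⟩, hdisc,
    ![0, 0, 1], by simp [eval]⟩

end TernaryForm

theorem isCoprime_four_mul_sub_three {n : ℤ} (hn : IsCoprime n 3) :
    IsCoprime (4 * n - 3) (48 * n) := by
  obtain ⟨u, v, huv⟩ := hn
  have h2 : IsCoprime (4 * n - 3) 2 := ⟨1, 2 - 2 * n, by ring⟩
  have h3 : IsCoprime (4 * n - 3) 3 := ⟨u, v + u - n * u, by linear_combination huv⟩
  have hn : IsCoprime (4 * n - 3) n := ⟨-v, u + 4 * v, by linear_combination huv⟩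
  have h48 : IsCoprime (4 * n - 3) (2 ^ 4 * 3) := h2.pow_right.mul_right h3
  exact h48.mul_right hn

theorem exists_prime_add_three_eq {n : ℕ} (hn : ¬ 3 ∣ n) :
    ∃ p E : ℕ, p.Prime ∧ p + 3 = 4 * n * E ∧ E % 12 = 1 := by
  have hn0 : n ≠ 0 := by rintro rfl; exact hn (dvd_zero 3)
  have hn3 : IsCoprime (n : ℤ) 3 :=
    Nat.isCoprime_iff_coprime.2 ((Nat.prime_three.coprime_iff_not_dvd).2 hn).symm
  have hcop : IsCoprime (4 * n - 3 : ℤ) (48 * n : ℕ) := by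
    push_cast
    exact isCoprime_four_mul_sub_three hn3
  obtain ⟨p, hgt, hp, hmod⟩ :=
    Nat.forall_exists_prime_gt_and_zmodEq (4 * n) (by omega : 48 * n ≠ 0) hcop
  obtain ⟨k, hk⟩ := hmod.symm.dvd
  push_cast at hk
  have hmul : 0 < 48 * (n : ℤ) * k := by
    have : (4 * n : ℤ) < p := by exact_mod_cast hgt
    linarith
  lift k to ℕ using (pos_of_mul_pos_right hmul (by positivity)).le
  exact ⟨p, 12 * k + 1, hp, by zify; linear_combination hk, by omega⟩

open scoped NumberTheorySymbols

theorem jacobiSym_neg_of_mod_four {a m : ℕ} (ha : Odd a) (hm : m % 4 = 1) :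
    J(-a | m) = J(m | a) := by
  have hm_odd : Odd m := Nat.odd_iff.2 (by omega)
  rw [← neg_one_mul, jacobiSym.mul_left, jacobiSym.at_neg_one hm_odd,
    ZMod.χ₄_nat_one_mod_four hm, one_mul, jacobiSym.quadratic_reciprocity_one_mod_four' ha hm]

theorem jacobiSym_neg_three_of_mod_twelve {m : ℕ} (hm : m % 12 = 1) : J(-3 | m) = 1 := by
  have hm3 : (m : ℤ) % (3 : ℕ) = 1 := by omega
  calc J(-3 | m) = J(m | 3) := jacobiSym_neg_of_mod_four (by decide) (by omega)
    _ = 1 := by rw [jacobiSym.mod_left, hm3, jacobiSym.one_left]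

theorem jacobiSym_neg_eq_one_of_add_three_eq {m p E : ℕ} (hE : E % 12 = 1)
    (hpE : p + 3 = 4 * m * E) : J(-E | p) = 1 := by
  have hp4 : p % 4 = 1 := by
    rw [mul_assoc] at hpE
    omega
  have hp_mod : (p : ℤ) ≡ -3 [ZMOD E] := by
    refine (Int.modEq_iff_dvd.2 ⟨4 * m, ?_⟩).symm
    zify at hpE
    linear_combination hpE
  rw [jacobiSym_neg_of_mod_four (Nat.odd_iff.2 (by omega)) hp4, jacobiSym.mod_left' hp_mod,
    jacobiSym_neg_three_of_mod_twelve hE]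

theorem exists_dvd_add_sq_of_jacobiSym_neg_eq_one {p : ℕ} (hp : p.Prime) {a : ℤ}
    (h : J(-a | p) = 1) : ∃ B : ℤ, (p : ℤ) ∣ a + B ^ 2 := by
  have : Fact p.Prime := ⟨hp⟩
  obtain ⟨s, hs⟩ := ZMod.isSquare_of_jacobiSym_eq_one h
  obtain ⟨B, rfl⟩ := ZMod.intCast_surjective s
  refine ⟨B, (ZMod.intCast_zmod_eq_zero_iff_dvd _ p).1 ?_⟩
  push_cast at hs ⊢
  linear_combination -hs

theorem exists_isPosDef_disc_eq_three_represents {n : ℕ} (hn : ¬ 3 ∣ n) :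
    ∃ F : TernaryForm, F.IsPosDef ∧ F.disc = 3 ∧ F.Represents n := by
  obtain ⟨p, E, hp, hpE, hE⟩ := exists_prime_add_three_eq hn
  obtain ⟨B, hB⟩ := exists_dvd_add_sq_of_jacobiSym_neg_eq_one hp
    (jacobiSym_neg_eq_one_of_add_three_eq hE hpE)
  exact TernaryForm.exists_isPosDef_represents_of_dvd (by exact_mod_cast hp.pos) (by omega)
    three_pos (by exact_mod_cast hpE) hB

theorem exists_sq_add_three_mul_sq_eq (v w : ℤ) :
    ∃ q r : ℤ, q ^ 2 + 3 * r ^ 2 = v ^ 2 + v * w + w ^ 2 := by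
  obtain ⟨i, rfl | rfl⟩ := Int.even_or_odd' v
  · exact ⟨w + i, i, by ring⟩
  · obtain ⟨j, rfl | rfl⟩ := Int.even_or_odd' w
    · exact ⟨2 * i + 1 + j, j, by ring⟩
    · exact ⟨i - j, i + j + 1, by ring⟩

theorem exists_sq_add_sq_add_three_mul_sq_eq {n : ℕ} (hn : ¬ 3 ∣ n) :
    ∃ x y z : ℤ, x ^ 2 + y ^ 2 + 3 * z ^ 2 = n := by
  obtain ⟨F, hF, hdisc, hrep⟩ := exists_isPosDef_disc_eq_three_represents hn
  obtain ⟨v, hv⟩ := (hF.equivalent_squareAddEisenstein hdisc).represents hrep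
  obtain ⟨y, z, hyz⟩ := exists_sq_add_three_mul_sq_eq (v 1) (v 2)
  refine ⟨v 0, y, z, ?_⟩
  rw [TernaryForm.eval, TernaryForm.squareAddEisenstein] at hv
  linear_combination hv + hyz

theorem three_dvd_and_not_dvd_of_sq_add_sq_modEq_one {u q : ℤ} (h : u ^ 2 + q ^ 2 ≡ 1 [ZMOD 3]) :
    (3 ∣ u ∧ ¬ 3 ∣ q) ∨ (3 ∣ q ∧ ¬ 3 ∣ u) := by
  have key : ∀ s t : ZMod 3, s ^ 2 + t ^ 2 = 1 → (s = 0 ∧ t ≠ 0) ∨ (t = 0 ∧ s ≠ 0) := by decide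
  have hzmod := (ZMod.intCast_eq_intCast_iff _ _ 3).2 h
  push_cast at hzmod
  simpa only [ne_eq, ZMod.intCast_zmod_eq_zero_iff_dvd, Nat.cast_ofNat] using key u q hzmod

theorem exists_sq_eq_three_mul_sub_one_sq {w : ℤ} (hw : ¬ 3 ∣ w) :
    ∃ z : ℤ, w ^ 2 = (3 * z - 1) ^ 2 := by
  obtain h | h : w % 3 = 1 ∨ w % 3 = 2 := by omega
  · exact ⟨(1 - w) / 3, sq_eq_sq_iff_eq_or_eq_neg.2 (Or.inr (by omega))⟩
  · exact ⟨(w + 1) / 3, sq_eq_sq_iff_eq_or_eq_neg.2 (Or.inl (by omega))⟩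

theorem exists_sq_add_sq_eq_of_modEq_one {u q : ℤ} (h : u ^ 2 + q ^ 2 ≡ 1 [ZMOD 3]) :
    ∃ y z : ℤ, u ^ 2 + q ^ 2 = (3 * y) ^ 2 + (3 * z - 1) ^ 2 := by
  obtain ⟨⟨y, rfl⟩, hq⟩ | ⟨⟨y, rfl⟩, hu⟩ := three_dvd_and_not_dvd_of_sq_add_sq_modEq_one h
  · obtain ⟨z, hz⟩ := exists_sq_eq_three_mul_sub_one_sq hq
    exact ⟨y, z, by rw [hz]⟩
  · obtain ⟨z, hz⟩ := exists_sq_eq_three_mul_sub_one_sq hu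
    exact ⟨y, z, by rw [hz, add_comm]⟩

theorem universal_x2_3y2_P8 :
    ∀ N : ℤ, 0 ≤ N →
      ∃ x y z : ℤ, x ^ 2 + 3 * y ^ 2 + (3 * z ^ 2 - 2 * z) = N := by
  intro N hN
  lift N to ℕ using hN
  obtain ⟨u, q, x, hx⟩ := exists_sq_add_sq_add_three_mul_sq_eq (n := 3 * N + 1) (by omega)
  push_cast at hx
  have hmod : u ^ 2 + q ^ 2 ≡ 1 [ZMOD 3] :=
    Int.modEq_iff_dvd.2 ⟨x ^ 2 - N, by linear_combination -hx⟩
  obtain ⟨y, z, hyz⟩ := exists_sq_add_sq_eq_of_modEq_one hmod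
  exact ⟨x, y, z, by linarith⟩
end

section
/- For every nonnegative integer N, the equation 2x² + 3y² + (3z² − 2z) = N has an integer solution (x, y, z) ∈ ℤ³. That is, the ternary mixed sum 2x²+3y²+P₈(z) of generalized 4- and 8-gonal numbers is universal. -/
/-!
Multiplying by `3` and completing the square in `z`, it suffices to write `3N + 1` as
`u² + v² + 6w²`: exactly one of `u`, `v` is then divisible by `3`, and the other is `±(3z - 1)`.

Hermite reduction shows that every positive ternary form of determinant `6` is equivalent to
`x² + y² + 6z²`, to `x² + 2y² + 3z²`, or to an even form. Modulo `3` the first one is a sum of two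
squares of linear forms, but the second one is not. To represent `n ≡ 1 (mod 3)` by
`x² + y² + 6z²` it is therefore enough to find a positive form of determinant `6` which has `n` as
a diagonal entry, takes an odd value, and is a sum of two squares modulo `3`. Its off-diagonal
entries come from a square root modulo a prime `p`, which exists by quadratic reciprocity when `p`
is taken in a suitable arithmetic progression, using Dirichlet's theorem. This covers `4 ∤ n`; the
remaining case follows by descent.
-/

open Matrix
open scoped NumberTheorySymbols

section Congruence

variable {n R : Type*} [Fintype n] [CommRing R]

/-- `k` is a value of the quadratic form `x ↦ xᵀ A x`. -/
def TakesValue (A : Matrix n n R) (k : R) : Prop :=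
  ∃ x : n → R, x ⬝ᵥ A *ᵥ x = k

theorem TakesValue.sq_mul {A : Matrix n n R} {k : R} (h : TakesValue A k) (c : R) :
    TakesValue A (c ^ 2 * k) := by
  obtain ⟨x, rfl⟩ := h
  refine ⟨c • x, ?_⟩
  rw [mulVec_smul, dotProduct_smul, smul_dotProduct, smul_eq_mul, smul_eq_mul, sq, mul_assoc]

variable [DecidableEq n]

/-- Congruence of square matrices over a commutative ring: equality of the bilinear forms they
represent up to an invertible change of basis of `n → R`. -/
def IsCongruent (A B : Matrix n n R) : Prop :=
  ∃ U : Matrix n n R, IsUnit U ∧ Uᵀ * A * U = B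

namespace IsCongruent

variable {A B C : Matrix n n R}

theorem refl (A : Matrix n n R) : IsCongruent A A :=
  ⟨1, isUnit_one, by simp⟩

theorem symm (h : IsCongruent A B) : IsCongruent B A := by
  obtain ⟨U, hU, rfl⟩ := h
  lift U to (Matrix n n R)ˣ using hU
  have hU_inv : (U : Matrix n n R) * (U⁻¹ : (Matrix n n R)ˣ) = 1 := U.mul_inv
  refine ⟨(U⁻¹ : (Matrix n n R)ˣ), Units.isUnit _, ?_⟩
  rw [← Matrix.mul_assoc, ← Matrix.mul_assoc, ← transpose_mul, hU_inv, Matrix.mul_assoc, hU_inv,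
    transpose_one, Matrix.one_mul, Matrix.mul_one]

theorem trans (hAB : IsCongruent A B) (hBC : IsCongruent B C) : IsCongruent A C := by
  obtain ⟨U, hU, rfl⟩ := hAB
  obtain ⟨V, hV, rfl⟩ := hBC
  exact ⟨U * V, hU.mul hV, by simp only [transpose_mul, Matrix.mul_assoc]⟩

theorem submatrix_perm (A : Matrix n n R) (σ : Equiv.Perm n) :
    IsCongruent A (A.submatrix σ σ) := by
  refine ⟨(σ⁻¹).permMatrix R, ?_, ?_⟩
  · rw [isUnit_iff_isUnit_det, det_permutation]
    exact ((Equiv.Perm.sign σ⁻¹).isUnit).map (Int.castRingHom R)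
  · ext i j
    simp only [transpose_permMatrix, inv_inv, PEquiv.toMatrix_toPEquiv_mul,
      PEquiv.mul_toMatrix_toPEquiv, submatrix_apply, id_eq]
    rfl

theorem takesValue (h : IsCongruent A B) {k : R} (hk : TakesValue B k) : TakesValue A k := by
  obtain ⟨U, -, rfl⟩ := h
  obtain ⟨x, rfl⟩ := hk
  refine ⟨U *ᵥ x, ?_⟩
  simp only [mulVec_mulVec, dotProduct_mulVec, vecMul_mulVec, Matrix.mul_assoc]

theorem det_eq {A B : Matrix n n ℤ} (h : IsCongruent A B) : B.det = A.det := by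
  obtain ⟨U, hU, rfl⟩ := h
  rw [det_mul, det_mul, det_transpose, mul_right_comm,
    Int.isUnit_mul_self ((isUnit_iff_isUnit_det U).mp hU), one_mul]

theorem posDef {A B : Matrix n n ℤ} (h : IsCongruent A B) (hA : A.PosDef) : B.PosDef := by
  obtain ⟨U, hU, rfl⟩ := h
  exact hA.conjTranspose_mul_mul_same (mulVec_injective_of_isUnit hU)

theorem exists_map_eq_transpose_mul_self {S m : Type*} [Fintype m] [CommRing S] (f : R →+* S)
    (h : IsCongruent A B) (hA : ∃ L : Matrix m n S, A.map f = Lᵀ * L) :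
    ∃ L : Matrix m n S, B.map f = Lᵀ * L := by
  obtain ⟨U, -, rfl⟩ := h
  obtain ⟨L, hL⟩ := hA
  refine ⟨L * U.map f, ?_⟩
  rw [Matrix.map_mul, Matrix.map_mul, hL, transpose_mul, transpose_map]
  simp only [Matrix.mul_assoc]

end IsCongruent

end Congruence

section HermiteReduction

/-- The minor of `A` on rows `0, i` and columns `0, j`, for symmetric `A`. These are `A 0 0` times
the entries of the Schur complement of `A 0 0`. -/
def pivotMinor {R : Type*} [CommRing R] (A : Matrix (Fin 3) (Fin 3) R) (i j : Fin 3) : R :=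
  A 0 0 * A i j - A 0 i * A 0 j

theorem pivotMinor_mul_sub_sq {R : Type*} [CommRing R] {A : Matrix (Fin 3) (Fin 3) R}
    (hA : A.IsSymm) :
    pivotMinor A 1 1 * pivotMinor A 2 2 - pivotMinor A 1 2 ^ 2 = A 0 0 * A.det := by
  rw [det_fin_three, hA.apply 0 1, hA.apply 0 2, hA.apply 1 2]
  simp only [pivotMinor]
  ring

theorem dotProduct_mulVec_fin_three_of_isSymm {R : Type*} [CommRing R]
    {A : Matrix (Fin 3) (Fin 3) R} (hA : A.IsSymm) (x : Fin 3 → R) :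
    x ⬝ᵥ A *ᵥ x = A 0 0 * x 0 ^ 2 + A 1 1 * x 1 ^ 2 + A 2 2 * x 2 ^ 2 +
      2 * (A 0 1 * x 0 * x 1 + A 0 2 * x 0 * x 2 + A 1 2 * x 1 * x 2) := by
  simp only [dotProduct, mulVec, Fin.sum_univ_three, hA.apply 0 1, hA.apply 0 2, hA.apply 1 2]
  ring

variable {A : Matrix (Fin 3) (Fin 3) ℤ}

theorem pivotMinor_one_one_pos (hA : A.PosDef) : 0 < pivotMinor A 1 1 := by
  have hsymm : A.IsSymm := hA.isHermitian
  have hpivot : 0 < A 0 0 := hA.diag_pos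
  have hvec : (![-A 0 1, A 0 0, 0] : Fin 3 → ℤ) ≠ 0 := fun h => hpivot.ne' (congrFun h 1)
  have hvalue := hA.dotProduct_mulVec_pos hvec
  rw [star_trivial, dotProduct_mulVec_fin_three_of_isSymm hsymm] at hvalue
  refine pos_of_mul_pos_right (lt_of_lt_of_eq hvalue ?_) hpivot.le
  simp only [pivotMinor, cons_val]
  ring

theorem posDef_of_pivots_pos (hA : A.IsSymm) (h₁ : 0 < A 0 0) (h₂ : 0 < pivotMinor A 1 1)
    (h₃ : 0 < A.det) : A.PosDef := by
  refine .of_dotProduct_mulVec_pos hA fun x hx => ?_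
  rw [star_trivial]
  have hsquares : A 0 0 * pivotMinor A 1 1 * (x ⬝ᵥ A *ᵥ x) =
      pivotMinor A 1 1 * (A 0 0 * x 0 + A 0 1 * x 1 + A 0 2 * x 2) ^ 2 +
      (pivotMinor A 1 1 * x 1 + pivotMinor A 1 2 * x 2) ^ 2 + A 0 0 * A.det * x 2 ^ 2 := by
    rw [dotProduct_mulVec_fin_three_of_isSymm hA, ← pivotMinor_mul_sub_sq hA]
    simp only [pivotMinor]
    ring
  refine pos_of_mul_pos_right (a := A 0 0 * pivotMinor A 1 1) ?_ (by positivity)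
  rw [hsquares]
  by_cases hz : x 2 = 0
  · by_cases hy : x 1 = 0
    · have hx0 : x 0 ≠ 0 := fun h0 => hx (by ext i; fin_cases i <;> assumption)
      simp only [hz, hy, mul_zero, add_zero]
      positivity
    · simp only [hz, mul_zero, add_zero]
      positivity
  · positivity

/-- The reduction conditions of Hermite for positive ternary forms: the form is reduced along its
first basis vector, and the binary form `pivotMinor A` of the Schur complement is reduced too. -/
structure IsHermiteReduced (A : Matrix (Fin 3) (Fin 3) ℤ) : Prop where
  abs_two_mul_apply_zero_one_le : |2 * A 0 1| ≤ A 0 0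
  abs_two_mul_apply_zero_two_le : |2 * A 0 2| ≤ A 0 0
  abs_two_mul_pivotMinor_le : |2 * pivotMinor A 1 2| ≤ pivotMinor A 1 1
  apply_zero_zero_le : A 0 0 ≤ A 1 1
  pivotMinor_one_one_le : pivotMinor A 1 1 ≤ pivotMinor A 2 2

theorem exists_abs_two_mul_add_mul_le (t : ℤ) {a : ℤ} (ha : 0 < a) :
    ∃ k : ℤ, |2 * (t + k * a)| ≤ a := by
  refine ⟨-((2 * t + a) / (2 * a)), abs_le.mpr ?_⟩
  have hdiv := Int.emod_add_mul_ediv (2 * t + a) (2 * a)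
  have hnonneg := Int.emod_nonneg (2 * t + a) (by omega : 2 * a ≠ 0)
  have hlt := Int.emod_lt_of_pos (2 * t + a) (by omega : 0 < 2 * a)
  constructor <;> linarith

theorem exists_isCongruent_size_reduced (hA : A.PosDef) :
    ∃ B, IsCongruent A B ∧ B 0 0 = A 0 0 ∧ pivotMinor B 1 1 = pivotMinor A 1 1 ∧
      |2 * B 0 1| ≤ B 0 0 ∧ |2 * B 0 2| ≤ B 0 0 ∧ |2 * pivotMinor B 1 2| ≤ pivotMinor B 1 1 := by
  have hsymm : A.IsSymm := hA.isHermitian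
  have hpivot : 0 < A 0 0 := hA.diag_pos
  obtain ⟨k, hk⟩ := exists_abs_two_mul_add_mul_le (A 0 1) hpivot
  obtain ⟨l, hl⟩ := exists_abs_two_mul_add_mul_le (pivotMinor A 1 2) (pivotMinor_one_one_pos hA)
  obtain ⟨m, hm⟩ := exists_abs_two_mul_add_mul_le (A 0 2 + l * A 0 1) hpivot
  let U : Matrix (Fin 3) (Fin 3) ℤ := !![1, k, m; 0, 1, l; 0, 0, 1]
  have hU : IsUnit U := by simp [isUnit_iff_isUnit_det, U, det_fin_three]
  let B := Uᵀ * A * U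
  have hB (i j : Fin 3) : B i j = ∑ q, (∑ p, U p i * A p q) * U q j := by
    simp only [B, mul_apply, transpose_apply]
  have h00 : B 0 0 = A 0 0 := by simp [hB, U, Fin.sum_univ_three]
  have h01 : B 0 1 = A 0 1 + k * A 0 0 := by
    simp only [hB, U, Fin.sum_univ_three, of_apply, cons_val]
    ring
  have h02 : B 0 2 = A 0 2 + l * A 0 1 + m * A 0 0 := by
    simp only [hB, U, Fin.sum_univ_three, of_apply, cons_val]
    ring
  have h11 : pivotMinor B 1 1 = pivotMinor A 1 1 := by
    simp only [pivotMinor, hB, U, Fin.sum_univ_three, of_apply, cons_val, hsymm.apply 0 1]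
    ring
  have h12 : pivotMinor B 1 2 = pivotMinor A 1 2 + l * pivotMinor A 1 1 := by
    simp only [pivotMinor, hB, U, Fin.sum_univ_three, of_apply, cons_val, hsymm.apply 0 1]
    ring
  exact ⟨B, ⟨U, hU, rfl⟩, h00, h11, by rwa [h01, h00], by rwa [h02, h00], by rwa [h12, h11]⟩

theorem exists_isCongruent_isHermiteReduced (hA : A.PosDef) :
    ∃ B, IsCongruent A B ∧ IsHermiteReduced B := by
  -- A congruent form that minimises both pivots stays minimal under size reduction, and comparing
  -- it with its coordinate swaps gives the last two conditions.
  let size (B : Matrix (Fin 3) (Fin 3) ℤ) : ℕ ×ₗ ℕ :=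
    toLex ((B 0 0).toNat, (pivotMinor B 1 1).toNat)
  obtain ⟨C, hAC, hmin⟩ := (InvImage.wf size wellFounded_lt).has_min {B | IsCongruent A B}
    ⟨A, .refl A⟩
  obtain ⟨B, hCB, h00, h11, hB01, hB02, hB12⟩ := exists_isCongruent_size_reduced (hAC.posDef hA)
  have hAB : IsCongruent A B := hAC.trans hCB
  have hB : B.PosDef := hAB.posDef hA
  have hminB (σ : Equiv.Perm (Fin 3)) : size B ≤ size (B.submatrix σ σ) := by
    have hsize : size B = size C := by simp only [size, h00, h11]
    exact hsize ▸ not_lt.mp (hmin _ (hAB.trans (.submatrix_perm B σ)))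
  refine ⟨B, hAB, hB01, hB02, hB12, ?_, ?_⟩
  · have hfst : (B 0 0).toNat ≤ (B 1 1).toNat := Prod.Lex.monotone_fst _ _ (hminB (.swap 0 1))
    have hpos : 0 < B 1 1 := hB.diag_pos
    omega
  · have hsnd : (pivotMinor B 1 1).toNat ≤ (pivotMinor B 2 2).toNat :=
      ((Prod.Lex.toLex_le_toLex.mp (hminB (.swap 1 2))).resolve_left (lt_irrefl _)).2
    have hpos : 0 < pivotMinor B 2 2 :=
      pivotMinor_one_one_pos (hB.submatrix (Equiv.swap (1 : Fin 3) 2).injective)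
    omega

namespace IsHermiteReduced

theorem three_mul_sq_le (h : IsHermiteReduced A) (hA : A.PosDef) :
    3 * A 0 0 ^ 2 ≤ 4 * pivotMinor A 1 1 := by
  have hpivot : 0 < A 0 0 := hA.diag_pos
  have hsq := sq_le_sq' (abs_le.mp h.abs_two_mul_apply_zero_one_le).1
    (abs_le.mp h.abs_two_mul_apply_zero_one_le).2
  have hdiag := mul_le_mul_of_nonneg_left h.apply_zero_zero_le hpivot.le
  rw [pivotMinor]
  linarith

theorem three_mul_pivotMinor_sq_le (h : IsHermiteReduced A) (hA : A.PosDef) :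
    3 * pivotMinor A 1 1 ^ 2 ≤ 4 * (A 0 0 * A.det) := by
  have hsq := sq_le_sq' (abs_le.mp h.abs_two_mul_pivotMinor_le).1
    (abs_le.mp h.abs_two_mul_pivotMinor_le).2
  have hdiag := mul_le_mul_of_nonneg_left h.pivotMinor_one_one_le (pivotMinor_one_one_pos hA).le
  have hsymm : A.IsSymm := hA.isHermitian
  rw [← pivotMinor_mul_sub_sq hsymm]
  linarith

theorem twentySeven_mul_cube_le (h : IsHermiteReduced A) (hA : A.PosDef) :
    27 * A 0 0 ^ 3 ≤ 64 * A.det := by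
  have hpivot : 0 < A 0 0 := hA.diag_pos
  refine le_of_mul_le_mul_left ?_ hpivot
  have hsq := pow_le_pow_left₀ (by positivity) (h.three_mul_sq_le hA) 2
  linarith [h.three_mul_pivotMinor_sq_le hA]

end IsHermiteReduced

end HermiteReduction

section DeterminantSix

theorem pivotMinor_map {R S : Type*} [CommRing R] [CommRing S] (f : R →+* S)
    (A : Matrix (Fin 3) (Fin 3) R) (i j : Fin 3) :
    pivotMinor (A.map f) i j = f (pivotMinor A i j) := by
  simp [pivotMinor]

theorem isSquare_pivotMinor_transpose_mul_self {R : Type*} [CommRing R]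
    (L : Matrix (Fin 2) (Fin 3) R) (i : Fin 3) : IsSquare (pivotMinor (Lᵀ * L) i i) := by
  refine ⟨L 0 0 * L 1 i - L 0 i * L 1 0, ?_⟩
  simp only [pivotMinor, mul_apply, transpose_apply, Fin.sum_univ_two]
  ring

variable {A : Matrix (Fin 3) (Fin 3) ℤ}

theorem even_of_takesValue_of_even_diag (hA : A.IsSymm) (heven : ∀ i, Even (A i i)) {k : ℤ}
    (hk : TakesValue A k) : Even k := by
  obtain ⟨x, rfl⟩ := hk
  rw [dotProduct_mulVec_fin_three_of_isSymm hA]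
  simp [heven, Int.even_add]

namespace IsHermiteReduced

theorem eq_diagonal_of_apply_zero_zero_eq_one (h : IsHermiteReduced A) (hA : A.PosDef)
    (hdet : A.det = 6) (h00 : A 0 0 = 1) :
    A = diagonal ![1, 1, 6] ∨ A = diagonal ![1, 2, 3] := by
  have hsymm : A.IsSymm := hA.isHermitian
  have h01 := abs_le.mp h.abs_two_mul_apply_zero_one_le
  have h02 := abs_le.mp h.abs_two_mul_apply_zero_two_le
  have h12 := abs_le.mp h.abs_two_mul_pivotMinor_le
  have hminor := h.three_mul_pivotMinor_sq_le hA
  have hschur := pivotMinor_mul_sub_sq hsymm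
  have hA01 : A 0 1 = 0 := by omega
  have hA02 : A 0 2 = 0 := by omega
  simp only [pivotMinor, hdet, h00, hA01, hA02, one_mul, mul_zero, sub_zero] at h12 hminor hschur
  have hA11 : A 1 1 = 1 ∨ A 1 1 = 2 := by
    have hpos : 0 < A 1 1 := hA.diag_pos
    have hle : A 1 1 ≤ 2 := by nlinarith
    omega
  have hentries : A 1 2 = 0 ∧ (A 1 1 = 1 ∧ A 2 2 = 6 ∨ A 1 1 = 2 ∧ A 2 2 = 3) := by
    have h12_cases : A 1 2 = -1 ∨ A 1 2 = 0 ∨ A 1 2 = 1 := by omega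
    rcases hA11 with hA11 | hA11 <;> rcases h12_cases with hA12 | hA12 | hA12 <;>
      rw [hA11, hA12] at hschur <;> omega
  rw [← Matrix.ext_iff, ← Matrix.ext_iff]
  simp [Fin.forall_fin_succ, hsymm.apply 0 1, hsymm.apply 0 2, hsymm.apply 1 2, h00, hA01, hA02,
    hentries]

theorem even_diag_of_apply_zero_zero_eq_two (h : IsHermiteReduced A) (hA : A.PosDef)
    (hdet : A.det = 6) (h00 : A 0 0 = 2) (i : Fin 3) : Even (A i i) := by
  have hsymm : A.IsSymm := hA.isHermitian
  have h01 := abs_le.mp h.abs_two_mul_apply_zero_one_le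
  have h02 := abs_le.mp h.abs_two_mul_apply_zero_two_le
  have h12 := abs_le.mp h.abs_two_mul_pivotMinor_le
  have h11 := h.apply_zero_zero_le
  have hminor := h.three_mul_pivotMinor_sq_le hA
  have hschur := pivotMinor_mul_sub_sq hsymm
  have hminor_le : pivotMinor A 1 1 ≤ 4 := by
    rw [h00, hdet] at hminor
    nlinarith
  have hA01 : A 0 1 = -1 ∨ A 0 1 = 0 ∨ A 0 1 = 1 := by omega
  have hA02 : A 0 2 = -1 ∨ A 0 2 = 0 ∨ A 0 2 = 1 := by omega
  simp only [pivotMinor, hdet, h00] at h12 hschur hminor_le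
  have hA11 : A 1 1 = 2 := by
    rcases hA01 with hA01 | hA01 | hA01 <;> rw [hA01] at hminor_le <;> omega
  have hA12 : A 1 2 = -1 ∨ A 1 2 = 0 ∨ A 1 2 = 1 := by
    rcases hA01 with hA01 | hA01 | hA01 <;> rcases hA02 with hA02 | hA02 | hA02 <;>
      rw [hA01, hA02, hA11] at h12 <;> omega
  have hA22 : Even (A 2 2) := by
    rw [Int.even_iff]
    rcases hA01 with hA01 | hA01 | hA01 <;> rcases hA02 with hA02 | hA02 | hA02 <;>
      rcases hA12 with hA12 | hA12 | hA12 <;> rw [hA01, hA02, hA11, hA12] at hschur <;> omega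
  fin_cases i
  exacts [h00 ▸ even_two, hA11 ▸ even_two, hA22]

theorem eq_diagonal_or_even_diag_of_det_eq_six (h : IsHermiteReduced A) (hA : A.PosDef)
    (hdet : A.det = 6) :
    A = diagonal ![1, 1, 6] ∨ A = diagonal ![1, 2, 3] ∨ ∀ i, Even (A i i) := by
  have hpos : 0 < A 0 0 := hA.diag_pos
  have hle : A 0 0 ≤ 2 := by
    by_contra! hgt
    have hcube := pow_le_pow_left₀ (by norm_num : (0 : ℤ) ≤ 3) hgt 3
    linarith [h.twentySeven_mul_cube_le hA]
  rcases (by omega : A 0 0 = 1 ∨ A 0 0 = 2) with h00 | h00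
  · exact or_assoc.mp (.inl (h.eq_diagonal_of_apply_zero_zero_eq_one hA hdet h00))
  · exact .inr (.inr (h.even_diag_of_apply_zero_zero_eq_two hA hdet h00))

end IsHermiteReduced

theorem isCongruent_diagonal_one_one_six (hA : A.PosDef) (hdet : A.det = 6)
    (hodd : ∃ k, TakesValue A k ∧ Odd k)
    (hmod : ∃ L : Matrix (Fin 2) (Fin 3) (ZMod 3), A.map (Int.castRingHom (ZMod 3)) = Lᵀ * L) :
    IsCongruent A (diagonal ![1, 1, 6]) := by
  obtain ⟨B, hAB, hB⟩ := exists_isCongruent_isHermiteReduced hA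
  have hBpos : B.PosDef := hAB.posDef hA
  rcases hB.eq_diagonal_or_even_diag_of_det_eq_six hBpos (hAB.det_eq.trans hdet) with
    rfl | rfl | heven
  · exact hAB
  · obtain ⟨L, hL⟩ := hAB.exists_map_eq_transpose_mul_self _ hmod
    have hsquare := isSquare_pivotMinor_transpose_mul_self L 1
    rw [← hL, pivotMinor_map] at hsquare
    have htwo : pivotMinor (diagonal ![1, 2, 3] : Matrix (Fin 3) (Fin 3) ℤ) 1 1 = 2 := by
      simp [pivotMinor]
    rw [htwo] at hsquare
    exact absurd hsquare (by decide)
  · obtain ⟨k, hk, hk_odd⟩ := hodd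
    have hBsymm : B.IsSymm := hBpos.isHermitian
    exact absurd (even_of_takesValue_of_even_diag hBsymm heven (hAB.symm.takesValue hk))
      (Int.not_even_iff_odd.mpr hk_odd)

theorem takesValue_diagonal_one_one_six_iff {n : ℤ} :
    TakesValue (diagonal ![1, 1, 6]) n ↔ ∃ u v w : ℤ, u ^ 2 + v ^ 2 + 6 * w ^ 2 = n := by
  have hvalue (x : Fin 3 → ℤ) :
      x ⬝ᵥ diagonal ![1, 1, 6] *ᵥ x = x 0 ^ 2 + x 1 ^ 2 + 6 * x 2 ^ 2 := by
    simp only [dotProduct, mulVec_diagonal, Fin.sum_univ_three, cons_val]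
    ring
  simp only [TakesValue, hvalue]
  exact ⟨fun ⟨x, hx⟩ => ⟨x 0, x 1, x 2, hx⟩, fun ⟨u, v, w, h⟩ => ⟨![u, v, w], h⟩⟩

end DeterminantSix

section BorderedForm

/-- The binary form `a x² + 2 b x y + c y²` bordered by a third variable whose square has the
coefficient `n`, so that `n` is a value of the form. -/
def borderedForm {R : Type*} [Zero R] (a b c g n : R) : Matrix (Fin 3) (Fin 3) R :=
  !![a, b, g; b, c, 0; g, 0, n]

theorem borderedForm_map {R S : Type*} [CommRing R] [CommRing S] (f : R →+* S) (a b c g n : R) :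
    (borderedForm a b c g n).map f = borderedForm (f a) (f b) (f c) (f g) (f n) := by
  ext i j
  fin_cases i <;> fin_cases j <;> simp [borderedForm]

theorem det_borderedForm {R : Type*} [CommRing R] (a b c g n : R) :
    (borderedForm a b c g n).det = n * (a * c - b ^ 2) - g ^ 2 * c := by
  simp only [borderedForm, det_fin_three, of_apply, cons_val]
  ring

theorem posDef_borderedForm {a b c g n : ℤ} (hc : 0 < c) (hdisc : 0 < a * c - b ^ 2)
    (hdet : 0 < n * (a * c - b ^ 2) - g ^ 2 * c) : (borderedForm a b c g n).PosDef := by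
  have hsymm : (borderedForm a b c g n).IsSymm := by
    ext i j
    fin_cases i <;> fin_cases j <;> rfl
  have hpivot : 0 < a := pos_of_mul_pos_left (b := c) (by linarith [sq_nonneg b]) hc.le
  have hminor : pivotMinor (borderedForm a b c g n) 1 1 = a * c - b ^ 2 := by
    rw [sq]
    rfl
  exact posDef_of_pivots_pos hsymm hpivot (hminor ▸ hdisc) (det_borderedForm a b c g n ▸ hdet)

theorem borderedForm_one_eq_transpose_mul_self {a b c g : ZMod 3} (hdisc : a * c - b ^ 2 = 1)
    (hgc : g ^ 2 * c = 1) :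
    borderedForm a b c g 1 = (!![g, 0, 1; b, 1, 0])ᵀ * !![g, 0, 1; b, 1, 0] := by
  have hunit : ∀ g c : ZMod 3, g ^ 2 * c = 1 → g ^ 2 = 1 ∧ c = 1 := by decide
  obtain ⟨hg, rfl⟩ := hunit g c hgc
  have ha : a = g ^ 2 + b ^ 2 := by linear_combination hdisc - hg
  ext i j
  fin_cases i <;> fin_cases j <;> simp [borderedForm, mul_apply, Fin.sum_univ_two, ha, sq]

theorem takesValue_diagonal_of_mul_sub_sq_mul_eq_six {n g a b c d : ℤ} (hn : n % 3 = 1)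
    (hd3 : d % 3 = 1) (hc : 0 < c) (hd : 0 < d) (hdet : n * d - g ^ 2 * c = 6)
    (hac : a * c = d + b ^ 2) (hodd : Odd a ∨ Odd c ∨ Odd n) :
    TakesValue (diagonal ![1, 1, 6]) n := by
  obtain rfl : d = a * c - b ^ 2 := by linarith
  have hdiag (i : Fin 3) :
      TakesValue (borderedForm a b c g n) (borderedForm a b c g n i i) :=
    ⟨Pi.single i 1, by simp⟩
  have hvalue_odd : ∃ k, TakesValue (borderedForm a b c g n) k ∧ Odd k := by
    rcases hodd with h | h | h
    exacts [⟨a, hdiag 0, h⟩, ⟨c, hdiag 1, h⟩, ⟨n, hdiag 2, h⟩]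
  have hn_cast : (n : ZMod 3) = 1 := by exact_mod_cast (ZMod.intCast_eq_intCast_iff' n 1 3).mpr hn
  have hd_cast : (a : ZMod 3) * c - b ^ 2 = 1 := by
    exact_mod_cast (ZMod.intCast_eq_intCast_iff' _ 1 3).mpr hd3
  have hgc_cast : (g : ZMod 3) ^ 2 * c = 1 := by
    have hdet_cast := congrArg (Int.cast : ℤ → ZMod 3) hdet
    push_cast [hn_cast, hd_cast] at hdet_cast
    linear_combination -hdet_cast - (by decide : (6 : ZMod 3) = 0)
  have hmod : (borderedForm a b c g n).map (Int.castRingHom (ZMod 3)) =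
      borderedForm (a : ZMod 3) b c g 1 := by
    rw [borderedForm_map, ← hn_cast]
    rfl
  exact (isCongruent_diagonal_one_one_six (posDef_borderedForm hc hd (by omega))
    ((det_borderedForm a b c g n).trans hdet) hvalue_odd
    ⟨_, hmod.trans (borderedForm_one_eq_transpose_mul_self hd_cast hgc_cast)⟩).symm.takesValue
    (hdiag 2)

end BorderedForm

section QuadraticResidues

theorem jacobiSym_neg_eq_swap {d p : ℕ} (hd : Odd d) (hp : Odd p) (h : p % 4 = 1 ∨ d % 4 = 3) :
    J(-d | p) = J(p | d) := by
  rw [jacobiSym.neg _ hp]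
  rcases Nat.odd_mod_four_iff.mp (Nat.odd_iff.mp hp) with hp4 | hp4
  · rw [ZMod.χ₄_nat_one_mod_four hp4, one_mul,
      jacobiSym.quadratic_reciprocity_one_mod_four' hd hp4]
  · have hd4 : d % 4 = 3 := by omega
    rw [ZMod.χ₄_nat_three_mod_four hp4, jacobiSym.quadratic_reciprocity_three_mod_four hd4 hp4,
      neg_one_mul, neg_neg]

theorem jacobiSym_neg_three {d : ℕ} (hd : Odd d) : J(-3 | d) = J(d % 3 | 3) :=
  (jacobiSym_neg_eq_swap (d := 3) (by decide) hd (.inr rfl)).trans (jacobiSym.mod_left d 3)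

theorem jacobiSym_neg_six_eq_one {d : ℕ} (hd3 : d % 3 = 1) (hd8 : d % 8 = 1 ∨ d % 8 = 7) :
    J(-6 | d) = 1 := by
  have hd : Odd d := Nat.odd_iff.mpr (by omega)
  have htwo : J(2 | d) = 1 := by
    rw [jacobiSym.at_two hd, ZMod.χ₈_nat_eq_if_mod_eight, if_neg (by omega), if_pos hd8]
  have hthree : J(-3 | d) = 1 := by
    rw [jacobiSym_neg_three hd, show (d : ℤ) % 3 = 1 by omega, jacobiSym.one_left]
  rw [show (-6 : ℤ) = 2 * -3 by norm_num, jacobiSym.mul_left, htwo, hthree, one_mul]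

theorem exists_dvd_add_sq_of_jacobiSym_neg {p : ℕ} (hp : p.Prime) {d : ℤ} (h : J(-d | p) = 1) :
    ∃ b : ℤ, (p : ℤ) ∣ d + b ^ 2 := by
  have : Fact p.Prime := ⟨hp⟩
  obtain ⟨y, hy⟩ := ZMod.isSquare_of_jacobiSym_eq_one h
  obtain ⟨b, rfl⟩ := ZMod.intCast_surjective y
  refine ⟨b, (ZMod.intCast_zmod_eq_zero_iff_dvd _ p).mp ?_⟩
  push_cast at hy ⊢
  linear_combination -hy

theorem exists_dvd_add_two_mul_sq_of_dvd_two_mul_add_sq {p d y : ℤ} (hp : Odd p)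
    (h : p ∣ 2 * d + y ^ 2) : ∃ b : ℤ, p ∣ d + 2 * b ^ 2 := by
  obtain ⟨v, rfl⟩ := hp
  obtain ⟨q, hq⟩ := h
  have hcoprime : IsCoprime (2 * v + 1) 2 := ⟨1, -v, by ring⟩
  refine ⟨(v + 1) * y, hcoprime.dvd_of_dvd_mul_left ?_⟩
  exact ⟨q + (2 * v + 3) * y ^ 2, by linear_combination hq⟩

end QuadraticResidues

section Dirichlet

theorem exists_prime_eq_mul_natCast_add {q x : ℤ} (hq : 0 < q) (h : IsCoprime x q) :
    ∃ p k : ℕ, p.Prime ∧ (p : ℤ) = q * k + x := by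
  lift q to ℕ using hq.le
  obtain ⟨p, hxp, hp, hmod⟩ := Nat.forall_exists_prime_gt_and_zmodEq x.natAbs (by omega) h
  obtain ⟨k, hk⟩ := hmod.symm.dvd
  have hk_pos : 0 < k := pos_of_mul_pos_right (a := (q : ℤ)) (by omega) hq.le
  lift k to ℕ using hk_pos.le
  exact ⟨p, k, hp, by linarith⟩

theorem isCoprime_twentyFour {x : ℤ} (h2 : ¬ 2 ∣ x) (h3 : ¬ 3 ∣ x) : IsCoprime x 24 := by
  have hx2 : IsCoprime x 2 := ((Int.prime_two.coprime_iff_not_dvd).mpr h2).symm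
  have hx3 : IsCoprime x 3 := ((Int.prime_three.coprime_iff_not_dvd).mpr h3).symm
  exact (hx2.pow_right (n := 3)).mul_right hx3

end Dirichlet

section Representation

theorem takesValue_diagonal_of_mul_sub_sq_mul_prime_eq_six {n g : ℤ} {d p : ℕ} (hp : p.Prime)
    (hp_odd : Odd p) (hn : n % 3 = 1) (hdet : n * d - g ^ 2 * p = 6) (hd3 : d % 3 = 1)
    (hd8 : d % 8 = 1 ∨ d % 8 = 7) (hpd : p % 4 = 1 ∨ d % 4 = 3) :
    TakesValue (diagonal ![1, 1, 6]) n := by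
  have hd_odd : Odd d := Nat.odd_iff.mpr (by omega)
  have hgd : g.gcd d = 1 := by
    obtain ⟨j, hj⟩ : ∃ j : ℤ, (d : ℤ) = 6 * j + 1 := ⟨d / 6, by omega⟩
    exact Int.isCoprime_iff_gcd_eq_one.mp
      ⟨j * g * p, 1 - j * n, by linear_combination hj - j * hdet⟩
  have hswap : J(p | d) = 1 := by
    have hmod : (g ^ 2 * p) % d = (-6 : ℤ) % d := by
      rw [show g ^ 2 * p = -6 + d * n by linear_combination -hdet, Int.add_mul_emod_self_left]
    calc J(p | d) = J(g ^ 2 * p | d) := by rw [jacobiSym.mul_left, jacobiSym.sq_one' hgd, one_mul]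
      _ = J(-6 | d) := jacobiSym.mod_left' hmod
      _ = 1 := jacobiSym_neg_six_eq_one hd3 hd8
  obtain ⟨b, a, hab⟩ :=
    exists_dvd_add_sq_of_jacobiSym_neg hp ((jacobiSym_neg_eq_swap hd_odd hp_odd hpd).trans hswap)
  exact takesValue_diagonal_of_mul_sub_sq_mul_eq_six (a := a) (b := b) hn (by omega)
    (mod_cast hp.pos) (by omega) hdet (by linarith) (.inr (.inl (mod_cast hp_odd)))

theorem takesValue_diagonal_two_mul_of_two_mul_sub_prime_eq_three {m : ℤ} {d p : ℕ} (hp : p.Prime)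
    (hp8 : p % 8 = 7) (hm : m % 3 = 2) (hdet : 2 * m * d - p = 3) (hd : d % 12 = 5) :
    TakesValue (diagonal ![1, 1, 6]) (2 * m) := by
  have hp_odd : Odd p := Nat.odd_iff.mpr (by omega)
  have hd_odd : Odd d := Nat.odd_iff.mpr (by omega)
  have hneg_two : J(-2 | p) = -1 := by
    rw [jacobiSym.at_neg_two hp_odd, ZMod.χ₈'_nat_eq_if_mod_eight, if_neg (by omega),
      if_neg (by omega)]
  have hd_p : J(d | p) = -1 := by
    have hmod : (p : ℤ) % d = -3 % d := by
      rw [show (p : ℤ) = -3 + d * (2 * m) by linear_combination -hdet, Int.add_mul_emod_self_left]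
    rw [jacobiSym.quadratic_reciprocity_one_mod_four (by omega) hp_odd, jacobiSym.mod_left' hmod,
      jacobiSym_neg_three hd_odd, show (d : ℤ) % 3 = 2 by omega]
    norm_num
  have hJ : J(-(2 * d) | p) = 1 := by
    rw [← neg_mul, jacobiSym.mul_left, hneg_two, hd_p]
    norm_num
  obtain ⟨y, hy⟩ := exists_dvd_add_sq_of_jacobiSym_neg hp hJ
  obtain ⟨b, a, hab⟩ :=
    exists_dvd_add_two_mul_sq_of_dvd_two_mul_add_sq (p := p) (mod_cast hp_odd) hy
  have ha_odd : Odd a := by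
    have hprod : Odd ((p : ℤ) * a) := hab ▸ Odd.add_even (mod_cast hd_odd) (even_two_mul _)
    exact (Int.odd_mul.mp hprod).2
  exact takesValue_diagonal_of_mul_sub_sq_mul_eq_six (n := 2 * m) (g := 1) (a := a) (b := 2 * b)
    (c := 2 * p) (d := 2 * d) (by omega) (by omega) (by have := hp.pos; omega) (by omega)
    (by linear_combination 2 * hdet) (by linear_combination -2 * hab) (.inl ha_odd)

theorem takesValue_diagonal_of_odd {n : ℤ} (hn : 0 < n) (hn3 : n % 3 = 1) (hn2 : Odd n) :
    TakesValue (diagonal ![1, 1, 6]) n := by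
  -- The prime is `p = n d - 6` with `d = 24 k + r`, where `r` is chosen so that `p ≡ 1 (mod 4)`.
  rw [Int.odd_iff] at hn2
  obtain ⟨r, hr, hrn⟩ : ∃ r : ℕ, (r = 1 ∨ r = 7) ∧ (r * n) % 4 = 3 := by
    rcases (by omega : n % 4 = 1 ∨ n % 4 = 3) with h | h
    · exact ⟨7, .inr rfl, by push_cast; omega⟩
    · exact ⟨1, .inl rfl, by push_cast; omega⟩
  have hcoprime : IsCoprime (r * n - 6) (24 * n) := by
    refine (isCoprime_twentyFour (by omega) (by rcases hr with rfl | rfl <;> omega)).mul_right ?_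
    exact ⟨n / 6, 1 - n / 6 * r, by linarith [(by omega : n = 6 * (n / 6) + 1)]⟩
  obtain ⟨p, k, hp, hpk⟩ := exists_prime_eq_mul_natCast_add (by omega) hcoprime
  have hp4 : p % 4 = 1 := by
    have : (p : ℤ) = 4 * (6 * (n * k)) + r * n - 6 := by linear_combination hpk
    omega
  exact takesValue_diagonal_of_mul_sub_sq_mul_prime_eq_six (g := 1) (d := 24 * k + r) hp
    (Nat.odd_iff.mpr (by omega)) hn3 (by push_cast; linear_combination -hpk) (by omega) (by omega)
    (.inl hp4)

theorem takesValue_diagonal_two_mul_of_mod_four_eq_three {m : ℤ} (hm : 0 < m) (hm3 : m % 3 = 2)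
    (hm4 : m % 4 = 3) : TakesValue (diagonal ![1, 1, 6]) (2 * m) := by
  obtain ⟨x, hx⟩ : ∃ x, 2 * x = 7 * m - 3 := ⟨(7 * m - 3) / 2, by omega⟩
  have hcoprime : IsCoprime x (12 * m) := by
    have hx24 : IsCoprime x (12 * 2) := isCoprime_twentyFour (by omega) (by omega)
    obtain ⟨j, hj⟩ : ∃ j, m = 3 * j + 2 := ⟨m / 3, by omega⟩
    exact hx24.of_mul_right_left.mul_right
      ⟨-2 * (j + 1), 7 * (j + 1) - 1, by linear_combination -(j + 1) * hx - hj⟩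
  obtain ⟨p, k, hp, hpk⟩ := exists_prime_eq_mul_natCast_add (by omega) hcoprime
  have hp_odd : Odd p := by
    have : (p : ℤ) = 2 * (6 * (m * k)) + x := by linear_combination hpk
    exact Nat.odd_iff.mpr (by omega)
  exact takesValue_diagonal_of_mul_sub_sq_mul_prime_eq_six (g := 2) (d := 24 * k + 7) hp hp_odd
    (by omega) (by push_cast; linear_combination -4 * hpk - 2 * hx) (by omega) (by omega)
    (.inr (by omega))

theorem takesValue_diagonal_two_mul_of_mod_four_eq_one {m : ℤ} (hm : 0 < m) (hm3 : m % 3 = 2)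
    (hm4 : m % 4 = 1) : TakesValue (diagonal ![1, 1, 6]) (2 * m) := by
  have hcoprime : IsCoprime (10 * m - 3) (24 * m) := by
    obtain ⟨j, hj⟩ : ∃ j, m = 3 * j + 2 := ⟨m / 3, by omega⟩
    exact (isCoprime_twentyFour (by omega) (by omega)).mul_right
      ⟨-(j + 1), 10 * (j + 1) - 1, by linear_combination -hj⟩
  obtain ⟨p, k, hp, hpk⟩ := exists_prime_eq_mul_natCast_add (by omega) hcoprime
  have hp8 : p % 8 = 7 := by
    have : (p : ℤ) = 8 * (3 * (m * k)) + (10 * m - 3) := by linear_combination hpk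
    omega
  exact takesValue_diagonal_two_mul_of_two_mul_sub_prime_eq_three (d := 12 * k + 5) hp hp8 hm3
    (by push_cast; linear_combination -hpk) (by omega)

theorem takesValue_diagonal_of_mod_three_eq_one (n : ℕ) (hn : n % 3 = 1) :
    TakesValue (diagonal ![1, 1, 6]) (n : ℤ) := by
  induction n using Nat.strong_induction_on with
  | _ n ih =>
  rcases Nat.even_or_odd' n with ⟨m, rfl | rfl⟩
  · push_cast
    rcases (by omega : m % 4 = 1 ∨ m % 4 = 3 ∨ m % 2 = 0) with hm | hm | hm
    · exact takesValue_diagonal_two_mul_of_mod_four_eq_one (by omega) (by omega) (by omega)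
    · exact takesValue_diagonal_two_mul_of_mod_four_eq_three (by omega) (by omega) (by omega)
    · have hquarter := ih (m / 2) (by omega) (by omega)
      rw [show (2 * m : ℤ) = 2 ^ 2 * (m / 2 : ℕ) by omega]
      exact hquarter.sq_mul 2
  · exact takesValue_diagonal_of_odd (by omega) (by omega) (by simp)

end Representation

theorem exists_octagonal_of_sq_add_sq_add_six_mul_sq {N u v w : ℤ}
    (h : u ^ 2 + v ^ 2 + 6 * w ^ 2 = 3 * N + 1) (hu : 3 ∣ u) (hv : ¬ 3 ∣ v) :
    ∃ x y z : ℤ, 2 * x ^ 2 + 3 * y ^ 2 + (3 * z ^ 2 - 2 * z) = N := by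
  obtain ⟨y, rfl⟩ := hu
  obtain ⟨z, hz⟩ : ∃ z, v = 3 * z - 1 ∨ v = -(3 * z - 1) := by
    rcases (by omega : v % 3 = 1 ∨ v % 3 = 2) with hv | hv
    · exact ⟨-(v / 3), .inr (by omega)⟩
    · exact ⟨v / 3 + 1, .inl (by omega)⟩
  have hsq : v ^ 2 = (3 * z - 1) ^ 2 := sq_eq_sq_iff_eq_or_eq_neg.mpr hz
  exact ⟨w, y, z, by linarith⟩

theorem three_dvd_xor_of_sq_add_sq_mod_three {u v : ℤ} (h : (u ^ 2 + v ^ 2) % 3 = 1) :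
    Xor (3 ∣ u) (3 ∣ v) := by
  rw [Int.add_emod] at h
  have hsq (x : ℤ) : 3 ∣ x ∧ x ^ 2 % 3 = 0 ∨ ¬ 3 ∣ x ∧ x ^ 2 % 3 = 1 := by
    rcases (by omega : x % 3 = 0 ∨ x % 3 = 1 ∨ x % 3 = 2) with hx | hx | hx <;>
      simp [Int.dvd_iff_emod_eq_zero, pow_two, Int.mul_emod, hx]
  rcases hsq u with ⟨hu, hu2⟩ | ⟨hu, hu2⟩ <;> rcases hsq v with ⟨hv, hv2⟩ | ⟨hv, hv2⟩ <;>
    simp_all [Xor]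

theorem universal_2x2_3y2_P8 :
    ∀ N : ℤ, 0 ≤ N →
      ∃ x y z : ℤ, 2 * x ^ 2 + 3 * y ^ 2 + (3 * z ^ 2 - 2 * z) = N := by
  intro N hN
  lift N to ℕ using hN
  obtain ⟨u, v, w, h⟩ := takesValue_diagonal_one_one_six_iff.mp
    (takesValue_diagonal_of_mod_three_eq_one (3 * N + 1) (by omega))
  push_cast at h
  rcases three_dvd_xor_of_sq_add_sq_mod_three (u := u) (v := v) (by omega) with
    ⟨hu, hv⟩ | ⟨hv, hu⟩
  · exact exists_octagonal_of_sq_add_sq_add_six_mul_sq h hu hv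
  · exact exists_octagonal_of_sq_add_sq_add_six_mul_sq (add_comm (u ^ 2) (v ^ 2) ▸ h) hv hu
end
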